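/- Let m ≥ 1, l ≥ 1, L ≥ 1 and nonnegative integers a_1,…,a_m with a_m ≥ a_k for all k ∈ [m] be given, and set i = l·m and K = l·(Σ_{k=1}^{m} a_k) + (i−1)L + 1. Then the optimal broadcast rate R* of the tilde-((a_m,…,a_1)×l)_L-ICP satisfies Σ_{t=1}^{m} (a_t + 1) ≤ R* ≤ (1/l)·min{ 2(K−(i−1)L) + i − 2 − a_m , K }. -/

import Mathlib

open Finset

/-- `<m>_n`: the unique element of `{1,…,n}` congruent to `m` modulo `n`. -/
def angMod (m : ℤ) (n : ℕ) : ℕ :=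
  if m % (n : ℤ) = 0 then n else (m % (n : ℤ)).toNat

/-- Message indices of the tilde-ICP: pairs in `[K] × [m]`. -/
abbrev Msg (K m : ℕ) : Type :=
  {p : ℕ × ℕ // p.1 ∈ Finset.Icc 1 K ∧ p.2 ∈ Finset.Icc 1 m}

/-- Users: elements of `[K]`. -/
abbrev User (K : ℕ) : Type := {k : ℕ // k ∈ Finset.Icc 1 K}

/-- The side-information index set of user `k` in the
tilde-`((a_m,…,a_1)×l)_L`-ICP (here `i = l·m`): the pairs `(b,t)` with
`t ∈ [m]`, `v ∈ [i−1]`, `r ∈ [L]`, and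
`b = <k + Σ_{j=1}^{v} a_{<m+t−j>_m} + (v−1)L + r>_K`. -/
def knownIdxT (K m i L : ℕ) (a : ℕ → ℕ) (k : ℕ) : Set (ℕ × ℕ) :=
  {p | ∃ t ∈ Finset.Icc 1 m, ∃ v ∈ Finset.Icc 1 (i - 1), ∃ r ∈ Finset.Icc 1 L,
    p.2 = t ∧
    p.1 = angMod ((k : ℤ) + (∑ j ∈ Finset.Icc 1 v, (a (angMod ((m : ℤ) + (t : ℤ) - (j : ℤ)) m) : ℤ))
        + ((v : ℤ) - 1) * (L : ℤ) + (r : ℤ)) K}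

/-- Want set of user `u` in the tilde-ICP: the messages `(u,t)`, `t ∈ [m]`. -/
def tildeWant (K m : ℕ) (u : User K) : Set (Msg K m) :=
  {p | p.1.1 = u.1}

/-- Known set of user `u` in the tilde-ICP. -/
def tildeKnown (K m i L : ℕ) (a : ℕ → ℕ) (u : User K) : Set (Msg K m) :=
  {p | p.1 ∈ knownIdxT K m i L a u.1}

/-- A valid index code of length `ℓ` for message length `t`. -/
def ValidCode {I U : Type} (W Kn : U → Set I) (t ℓ : ℕ) : Prop :=
  ∃ E : (I → Fin t → Bool) → Fin ℓ → Bool,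
  ∃ D : ∀ u : U, (Fin ℓ → Bool) → (↥(Kn u) → Fin t → Bool) → (↥(W u) → Fin t → Bool),
    ∀ x : I → Fin t → Bool, ∀ u : U,
      D u (E x) (fun m => x m.1) = fun m => x m.1

/-- The optimal broadcast rate of an index coding problem. -/
noncomputable def optRate {I U : Type} (W Kn : U → Set I) : ℝ :=
  sInf {ρ : ℝ | ∃ t ℓ : ℕ, 1 ≤ t ∧ ValidCode W Kn t ℓ ∧ ρ = (ℓ : ℝ) / (t : ℝ)}

theorem lb_code {I U : Type} (W Kn : U → Set I) (S : Finset I) (f : I → ℕ)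
    (h : ∀ μ ∈ S, ∃ u, μ ∈ W u ∧ ∀ ν ∈ S, ν ∈ Kn u → f ν < f μ)
    (t ℓ : ℕ) (hc : ValidCode W Kn t ℓ) : S.card * t ≤ ℓ := by
  classical
  obtain ⟨E, D, hD⟩ := hc
  let ext : (S → Fin t → Bool) → (I → Fin t → Bool) :=
    fun y μ => if hμ : μ ∈ S then y ⟨μ, hμ⟩ else fun _ => false
  have hinj : Function.Injective (fun y => E (ext y)) := by
    intro y y' hyy
    have key : ∀ n : ℕ, ∀ μ ∈ S, f μ = n → ext y μ = ext y' μ := by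
      intro n
      induction n using Nat.strong_induction_on with
      | _ n ih =>
        intro μ hμ hn
        obtain ⟨u, hu, hk⟩ := h μ hμ
        have h1 := hD (ext y) u
        have h2 := hD (ext y') u
        have h3 : (fun m : ↥(Kn u) => ext y m.1) = fun m : ↥(Kn u) => ext y' m.1 := by
          funext ν
          by_cases hν : ν.1 ∈ S
          · exact ih (f ν.1) (hn ▸ hk ν.1 hν ν.2) ν.1 hν rfl
          · simp [ext, hν]
        have hyy' : E (ext y) = E (ext y') := hyy
        rw [hyy', h3, h2] at h1
        exact (congrFun h1 ⟨μ, hu⟩).symm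
    funext μ
    have := key _ μ.1 μ.2 rfl
    simpa [ext] using this
  have hcard := Fintype.card_le_of_injective _ hinj
  simp only [Fintype.card_fun, Fintype.card_bool, Fintype.card_fin, Fintype.card_coe] at hcard
  rw [← pow_mul] at hcard
  have := (Nat.pow_le_pow_iff_right (by norm_num : 1 < 2)).1 hcard
  rw [mul_comm]; exact this

theorem ub_code {I U P : Type} [Fintype I] [Fintype P] (W Kn : U → Set I) (l N : ℕ)
    (pos : I → Fin l → P)
    (h1 : ∀ u, ∀ μ0 ∈ W u, ∀ q0, ∀ μ q, pos μ q = pos μ0 q0 → μ ∉ Kn u → μ = μ0 ∧ q = q0)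
    (h2 : ∀ u, ∃ B : Finset P, B.card ≤ N ∧ ∀ μ, μ ∉ Kn u → ∀ q, pos μ q ∈ B) :
    ∃ r, 1 ≤ r ∧ ValidCode W Kn (l * r) (N * r) := by
  classical
  let r := Fintype.card P + 1
  have hr : 1 ≤ r := Nat.le_add_left 1 _
  refine ⟨r, hr, ?_⟩
  let F := GaloisField 2 r
  have : Finite F := inferInstance
  let _ : Fintype F := Fintype.ofFinite F
  have hF : Fintype.card F = 2 ^ r := by
    rw [← Nat.card_eq_fintype_card]; exact GaloisField.card 2 r (by omega)
  have hPF : Fintype.card P ≤ Fintype.card F := by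
    rw [hF]
    have : r < 2 ^ r := Nat.lt_two_pow_self
    omega
  obtain ⟨ω⟩ := Function.Embedding.nonempty_of_card_le hPF
  have e1 : (Fin (l * r) → Bool) ≃ (Fin l → F) := Fintype.equivOfCardEq (by
    simp [hF, ← pow_mul, mul_comm])
  have e2 : (Fin N → F) ≃ (Fin (N * r) → Bool) := Fintype.equivOfCardEq (by
    simp [hF, ← pow_mul, mul_comm])
  let E0 : (I → Fin l → F) → (Fin N → F) :=
    fun x j => ∑ μ, ∑ q, x μ q * ω (pos μ q) ^ (j : ℕ)
  let E : (I → Fin (l * r) → Bool) → Fin (N * r) → Bool := fun x => e2 (E0 fun μ => e1 (x μ))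
  -- uniqueness
  have key : ∀ u (x x' : I → Fin l → F), E0 x = E0 x' → (∀ μ ∈ Kn u, x μ = x' μ) →
      ∀ μ ∈ W u, x μ = x' μ := by
    intro u x x' hE hK μ0 hμ0
    by_cases hk0 : μ0 ∈ Kn u
    · exact hK _ hk0
    obtain ⟨B, hB, hB'⟩ := h2 u
    funext q0
    have hp0 := hB' μ0 hk0 q0
    let g : Polynomial F := ∏ b ∈ B.erase (pos μ0 q0), (Polynomial.X - Polynomial.C (ω b))
    have hdeg : g.natDegree < N := by
      have : g.natDegree = (B.erase (pos μ0 q0)).card := by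
        simp only [g]
        rw [Polynomial.natDegree_prod_of_monic _ _ (fun b _ => Polynomial.monic_X_sub_C _)]
        simp
      rw [this, Finset.card_erase_of_mem hp0]
      have := Finset.card_pos.2 ⟨_, hp0⟩
      omega
    have hsum : ∑ μ, ∑ q, (x μ q - x' μ q) * g.eval (ω (pos μ q)) = 0 := by
      have hj : ∀ j ∈ Finset.range N, ∑ μ, ∑ q, (x μ q - x' μ q) * ω (pos μ q) ^ j = 0 := by
        intro j hj
        have := congrFun hE ⟨j, Finset.mem_range.1 hj⟩
        simp only [E0] at this
        simp only [sub_mul, Finset.sum_sub_distrib]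
        rw [this, sub_self]
      have hsw : ∀ μ q, (x μ q - x' μ q) * g.eval (ω (pos μ q)) = ∑ j ∈ Finset.range N,
              g.coeff j * ((x μ q - x' μ q) * ω (pos μ q) ^ j) := by
        intro μ q
        rw [Polynomial.eval_eq_sum_range' hdeg, Finset.mul_sum]
        exact Finset.sum_congr rfl fun j _ => by ring
      simp only [hsw]
      have h3 : ∀ μ, ∑ q, ∑ j ∈ Finset.range N,
          g.coeff j * ((x μ q - x' μ q) * ω (pos μ q) ^ j) = ∑ j ∈ Finset.range N, ∑ q,
          g.coeff j * ((x μ q - x' μ q) * ω (pos μ q) ^ j) := fun μ => Finset.sum_comm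
      simp only [h3]
      rw [Finset.sum_comm]
      refine Finset.sum_eq_zero fun j hj' => ?_
      simp only [← Finset.mul_sum]
      rw [hj j hj', mul_zero]
    have hz : ∀ μ q, ¬ (μ = μ0 ∧ q = q0) → (x μ q - x' μ q) * g.eval (ω (pos μ q)) = 0 := by
      intro μ q hne
      by_cases hk : μ ∈ Kn u
      · rw [hK μ hk, sub_self, zero_mul]
      · have hpne : pos μ q ≠ pos μ0 q0 := fun h => hne (h1 u μ0 hμ0 q0 μ q h hk)
        have : g.eval (ω (pos μ q)) = 0 := by
          simp only [g, Polynomial.eval_prod]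
          exact Finset.prod_eq_zero (Finset.mem_erase.2 ⟨hpne, hB' μ hk q⟩) (by simp)
        rw [this, mul_zero]
    rw [Finset.sum_eq_single μ0 (fun μ _ hμ => Finset.sum_eq_zero fun q _ =>
      hz μ q (fun h => hμ h.1)) (by simp),
      Finset.sum_eq_single q0 (fun q _ hq => hz μ0 q (fun h => hq h.2)) (by simp)] at hsum
    have hne : g.eval (ω (pos μ0 q0)) ≠ 0 := by
      simp only [g, Polynomial.eval_prod]
      refine Finset.prod_ne_zero_iff.2 fun b hb => ?_
      simp only [Polynomial.eval_sub, Polynomial.eval_X, Polynomial.eval_C]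
      exact sub_ne_zero.2 fun h => (Finset.mem_erase.1 hb).1 (ω.injective h).symm
    exact sub_eq_zero.1 ((mul_eq_zero.1 hsum).resolve_right hne)
  let D : ∀ u : U, (Fin (N * r) → Bool) → (↥(Kn u) → Fin (l * r) → Bool) →
      (↥(W u) → Fin (l * r) → Bool) := fun u y k =>
    if h : ∃ x, E x = y ∧ (fun m : ↥(Kn u) => x m.1) = k then fun m => h.choose m.1
    else fun _ _ => false
  refine ⟨E, D, ?_⟩
  intro x u
  have hex : ∃ x', E x' = E x ∧ (fun m : ↥(Kn u) => x' m.1) = fun m : ↥(Kn u) => x m.1 :=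
    ⟨x, rfl, rfl⟩
  simp only [D]
  rw [dif_pos hex]
  obtain ⟨ha, hb⟩ := hex.choose_spec
  funext m
  have := key u (fun μ => e1 (hex.choose μ)) (fun μ => e1 (x μ)) (e2.injective ha)
    (fun μ hμ => congrArg e1 (congrFun hb ⟨μ, hμ⟩)) m.1 m.2
  exact e1.injective this

theorem angMod_congr {x y : ℤ} {n : ℕ} (h : x ≡ y [ZMOD n]) : angMod x n = angMod y n := by
  unfold angMod; rw [h]

theorem angMod_modEq (x : ℤ) {n : ℕ} (hn : 1 ≤ n) : (angMod x n : ℤ) ≡ x [ZMOD n] := by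
  unfold angMod
  have h0 : (0 : ℤ) ≤ x % n := Int.emod_nonneg _ (by omega)
  split_ifs with h
  · unfold Int.ModEq; rw [h]; simp
  · rw [Int.toNat_of_nonneg h0]; exact Int.mod_modEq _ _

theorem angMod_mem (x : ℤ) {n : ℕ} (hn : 1 ≤ n) : 1 ≤ angMod x n ∧ angMod x n ≤ n := by
  unfold angMod
  have h0 : (0 : ℤ) ≤ x % n := Int.emod_nonneg _ (by omega)
  have h1 : x % n < n := Int.emod_lt_of_pos _ (by omega)
  split_ifs with h
  · omega
  · omega

theorem eq_of_modEq {b c n : ℕ} (hb : 1 ≤ b ∧ b ≤ n) (hc : 1 ≤ c ∧ c ≤ n)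
    (h : (b : ℤ) ≡ c [ZMOD n]) : b = c := by
  obtain ⟨k, hk⟩ := h.dvd
  have : k = 0 := by
    by_contra hk0
    rcases lt_or_gt_of_ne hk0 with h' | h'
    · have : (n : ℤ) * k ≤ n * (-1) := by gcongr; omega
      omega
    · have : (n : ℤ) * 1 ≤ n * k := by gcongr; omega
      omega
  subst this
  omega

/-- extended sequence -/
def alf (m : ℕ) (a : ℕ → ℕ) (n : ℕ) : ℕ := a (angMod (n : ℤ) m)

/-- `Q n = α 0 + ⋯ + α (n-1) + n L` -/
def QQ (m L : ℕ) (a : ℕ → ℕ) (n : ℕ) : ℕ := ∑ j ∈ Finset.range n, (alf m a j + L)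

theorem QQ_succ (m L : ℕ) (a : ℕ → ℕ) (n : ℕ) :
    QQ m L a (n + 1) = QQ m L a n + alf m a n + L := by
  simp [QQ, Finset.sum_range_succ]; ring

theorem QQ_mono (m L : ℕ) (a : ℕ → ℕ) : Monotone (QQ m L a) :=
  monotone_nat_of_le_succ fun n => by rw [QQ_succ]; omega

theorem alf_add (m : ℕ) (a : ℕ → ℕ) (n c : ℕ) : alf m a (n + m * c) = alf m a n := by
  unfold alf
  congr 1
  apply angMod_congr
  push_cast
  simp [Int.ModEq]

theorem alf_of_mem {m : ℕ} (a : ℕ → ℕ) {t : ℕ} (h : 1 ≤ t ∧ t ≤ m) : alf m a t = a t := by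
  unfold alf
  congr 1
  exact eq_of_modEq (angMod_mem _ (by omega)) h (angMod_modEq _ (by omega))

theorem QQ_add_m (m L : ℕ) (hm : 1 ≤ m) (a : ℕ → ℕ) (n : ℕ) :
    QQ m L a (n + m) = QQ m L a n + (∑ k ∈ Finset.Icc 1 m, a k) + m * L := by
  induction n with
  | zero =>
    have h1 : ∑ j ∈ Finset.range m, alf m a j = ∑ k ∈ Finset.Icc 1 m, a k := by
      have h2 : ∑ k ∈ Finset.Icc 1 m, a k = ∑ k ∈ Finset.Ico 1 (m + 1), alf m a k := by
        refine Finset.sum_congr ?_ fun k hk => ?_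
        · ext; simp
        · simp at hk; exact (alf_of_mem a ⟨by omega, by omega⟩).symm
      have h3 := Finset.sum_range_succ (alf m a) m
      rw [Finset.range_eq_Ico, Finset.sum_eq_sum_Ico_succ_bot (by omega)] at h3
      have h4 : alf m a m = alf m a 0 := by simpa using alf_add m a 0 1
      rw [h2]
      simp only [zero_add] at h3
      omega
    simp [QQ, Finset.sum_add_distrib, h1]
  | succ n ih =>
    have : alf m a (n + m) = alf m a n := by simpa using alf_add m a n 1
    rw [show n + 1 + m = (n + m) + 1 by ring, QQ_succ, QQ_succ, ih, this]
    ring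

theorem QQ_add_mul (m L : ℕ) (hm : 1 ≤ m) (a : ℕ → ℕ) (n l : ℕ) :
    QQ m L a (n + l * m) = QQ m L a n + l * (∑ k ∈ Finset.Icc 1 m, a k) + (l * m) * L := by
  induction l with
  | zero => simp
  | succ l ih =>
    rw [show n + (l + 1) * m = (n + l * m) + m by ring, QQ_add_m m L hm, ih]
    ring

theorem sum_eq (m L : ℕ) (a : ℕ → ℕ) (t s c v : ℕ) (hs : s = t + m * c) (hv : v ≤ s) :
    (∑ j ∈ Finset.Icc 1 v, (a (angMod ((m : ℤ) + (t : ℤ) - (j : ℤ)) m) : ℤ)) =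
      (QQ m L a s : ℤ) - QQ m L a (s - v) - v * L := by
  induction v with
  | zero => simp
  | succ v ih =>
    rw [Finset.sum_Icc_succ_top (by omega), ih (by omega)]
    have h1 : s - v = (s - (v + 1)) + 1 := by omega
    have h2 : a (angMod ((m : ℤ) + (t : ℤ) - ((v + 1 : ℕ) : ℤ)) m) = alf m a (s - (v + 1)) := by
      unfold alf
      congr 1
      apply angMod_congr
      rw [Nat.cast_sub hv, hs]
      apply Int.modEq_iff_dvd.2
      refine ⟨(c : ℤ) - 1, ?_⟩
      push_cast
      ring
    rw [h2, h1, QQ_succ]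
    push_cast
    ring

theorem known_iff (K m i L : ℕ) (a : ℕ → ℕ) (hK : 1 ≤ K) (k b t s c : ℕ) (hb : 1 ≤ b ∧ b ≤ K)
    (ht : 1 ≤ t ∧ t ≤ m) (hs : s = t + m * c) (his : i ≤ s) :
    (b, t) ∈ knownIdxT K m i L a k ↔ ∃ v r : ℕ, 1 ≤ v ∧ v + 1 ≤ i ∧ 1 ≤ r ∧ r ≤ L ∧
      (b : ℤ) ≡ k + ((QQ m L a s : ℤ) - QQ m L a (s - v) - L + r) [ZMOD K] := by
  have hval : ∀ v r : ℕ, v + 1 ≤ i → (k : ℤ) +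
      (∑ j ∈ Finset.Icc 1 v, (a (angMod ((m : ℤ) + (t : ℤ) - (j : ℤ)) m) : ℤ))
        + ((v : ℤ) - 1) * (L : ℤ) + (r : ℤ) =
        k + ((QQ m L a s : ℤ) - QQ m L a (s - v) - L + r) := by
    intro v r hv
    rw [sum_eq m L a t s c v hs (by omega)]
    ring
  constructor
  · rintro ⟨t', ht', v, hv, r, hr, h1, h2⟩
    simp only at h1 h2
    subst h1
    simp only [Finset.mem_Icc] at hv hr
    have hv' : v + 1 ≤ i := by omega
    refine ⟨v, r, hv.1, hv', hr.1, hr.2, ?_⟩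
    rw [hval v r hv'] at h2
    rw [h2]
    exact angMod_modEq _ hK
  · rintro ⟨v, r, hv1, hv2, hr1, hr2, h⟩
    refine ⟨t, Finset.mem_Icc.2 ht, v, Finset.mem_Icc.2 ⟨hv1, by omega⟩, r,
      Finset.mem_Icc.2 ⟨hr1, hr2⟩, rfl, ?_⟩
    simp only
    rw [hval v r hv2]
    exact eq_of_modEq hb (angMod_mem _ hK) (h.trans (angMod_modEq _ hK).symm)

theorem dec_known (K i L : ℕ) (hL : 1 ≤ L) (Q : ℕ → ℕ)
    (hper : ∀ n, Q (n + i) + 1 = Q n + K + L) (k b : ℤ) (s s0 : ℕ)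
    (hs : i < s ∧ s ≤ 2 * i) (hs0 : i < s0 ∧ s0 ≤ 2 * i) (hne : s ≠ s0)
    (h : b - Q s ≡ k - Q s0 [ZMOD K]) :
    ∃ v r : ℕ, 1 ≤ v ∧ v + 1 ≤ i ∧ 1 ≤ r ∧ r ≤ L ∧
      b ≡ k + ((Q s : ℤ) - Q (s - v) - L + r) [ZMOD K] := by
  obtain ⟨c, hc⟩ := h.dvd
  rcases lt_or_gt_of_ne hne with hlt | hlt
  · refine ⟨i - (s0 - s), 1, by omega, by omega, le_refl _, hL, ?_⟩
    apply Int.modEq_iff_dvd.2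
    refine ⟨c + 1, ?_⟩
    have h1 := hper (s - (i - (s0 - s)))
    have h2 : s - (i - (s0 - s)) + i = s0 := by omega
    rw [h2] at h1
    have h3 : (Q (s - (i - (s0 - s))) : ℤ) = Q s0 + 1 - K - L := by omega
    rw [h3]
    push_cast
    linear_combination hc
  · refine ⟨s - s0, L, by omega, by omega, hL, le_refl _, ?_⟩
    apply Int.modEq_iff_dvd.2
    refine ⟨c, ?_⟩
    rw [show s - (s - s0) = s0 by omega]
    linear_combination hc

theorem unknown_mem (K m i L : ℕ) (hK : 1 ≤ K) (hi : 1 ≤ i) (a : ℕ → ℕ)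
    (hper : ∀ n, QQ m L a (n + i) + 1 = QQ m L a n + K + L) (k b : ℤ) (s : ℕ)
    (hs : i < s ∧ s ≤ 2 * i)
    (h : ¬ ∃ v r : ℕ, 1 ≤ v ∧ v + 1 ≤ i ∧ 1 ≤ r ∧ r ≤ L ∧
      b ≡ k + ((QQ m L a s : ℤ) - QQ m L a (s - v) - L + r) [ZMOD K]) :
    b - QQ m L a s ≡ k - QQ m L a s [ZMOD K] ∨ ∃ n x : ℕ, 1 ≤ n ∧ n < 2 * i ∧ x < alf m a n ∧
      b - QQ m L a s ≡ k - QQ m L a (n + 1) + 1 + x [ZMOD K] := by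
  set d : ℤ := (b - k) % K with hd
  have hd0 : 0 ≤ d := Int.emod_nonneg _ (by omega)
  have hd1 : d < K := Int.emod_lt_of_pos _ (by omega)
  have hdm : d ≡ b - k [ZMOD K] := Int.mod_modEq _ _
  have hbd : b ≡ k + d [ZMOD K] := by
    have := (hdm.add_left k).symm
    rwa [show k + (b - k) = b by ring] at this
  rcases hd0.eq_or_lt with h0 | hpos
  · left
    rw [← h0, add_zero] at hbd
    exact hbd.sub_right _
  right
  have hQi : (QQ m L a s : ℤ) = QQ m L a (s - i) + K + L - 1 := by
    have := hper (s - i)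
    rw [Nat.sub_add_cancel (by omega)] at this
    omega
  have hex : ∃ v : ℕ, d ≤ (QQ m L a s : ℤ) - QQ m L a (s - v) := ⟨i, by omega⟩
  classical
  have hv := Nat.find_spec hex
  have hmin := fun w => Nat.find_min hex (m := w)
  have hvi : Nat.find hex ≤ i := Nat.find_min' hex (by omega)
  generalize Nat.find hex = v at hv hmin hvi
  have hv1 : 1 ≤ v := by
    rcases Nat.eq_zero_or_pos v with h' | h'
    · subst h'; simp at hv; omega
    · exact h'
  have hprev := hmin (v - 1) (by omega)
  rw [show s - (v - 1) = (s - v) + 1 by omega] at hprev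
  have hsucc := QQ_succ m L a (s - v)
  by_cases hgap : d ≤ (QQ m L a s : ℤ) - QQ m L a (s - v) - L
  · refine ⟨s - v, (d - ((QQ m L a s : ℤ) - QQ m L a (s - v + 1)) - 1).toNat, by omega, by omega,
      by omega, ?_⟩
    rw [Int.toNat_of_nonneg (by omega)]
    have := hbd.sub_right (QQ m L a s : ℤ)
    refine this.trans ?_
    refine congrArg (fun z : ℤ => z % (K : ℤ)) ?_
    ring
  · exfalso
    have hvi' : v ≠ i := by
      rintro rfl
      omega
    refine h ⟨v, (d - ((QQ m L a s : ℤ) - QQ m L a (s - v) - L)).toNat, hv1, by omega,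
      by omega, by omega, ?_⟩
    rw [Int.toNat_of_nonneg (by omega)]
    refine hbd.trans ?_
    refine congrArg (fun z : ℤ => z % (K : ℤ)) ?_
    ring

/-- Lemma 10 of the paper: bounds on the optimal broadcast rate
of the tilde-`((a_m,…,a_1)×l)_L`-ICP:
`Σ_{t=1}^{m}(a_t+1) ≤ R* ≤ (1/l)·min{2(K−(i−1)L)+i−2−a_m, K}`. -/
theorem stmt11 (m l L : ℕ) (hm : 1 ≤ m) (hl : 1 ≤ l) (hL : 1 ≤ L) (a : ℕ → ℕ)
    (hmax : ∀ k ∈ Finset.Icc 1 m, a k ≤ a m)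
    (i : ℕ) (hi : i = l * m)
    (K : ℕ) (hK : K = l * (∑ k ∈ Finset.Icc 1 m, a k) + (i - 1) * L + 1) :
    (∑ t ∈ Finset.Icc 1 m, ((a t : ℝ) + 1)) ≤
        optRate (tildeWant K m) (tildeKnown K m i L a) ∧
    optRate (tildeWant K m) (tildeKnown K m i L a) ≤
      (1 / (l : ℝ)) *
        min (2 * ((K : ℝ) - ((i : ℝ) - 1) * (L : ℝ)) + (i : ℝ) - 2 - (a m : ℝ)) (K : ℝ) := by
  have hi1 : 1 ≤ i := by rw [hi]; exact Nat.mul_pos hl hm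
  have hK1 : 1 ≤ K := by omega
  have hper : ∀ n, QQ m L a (n + i) + 1 = QQ m L a n + K + L := by
    intro n
    rw [hi, QQ_add_mul m L hm, ← hi, hK]
    obtain ⟨i', rfl⟩ : ∃ i', i = i' + 1 := ⟨i - 1, by omega⟩
    simp only [Nat.add_sub_cancel]
    ring
  have hs2 : ∀ t q : ℕ, 1 ≤ t ∧ t ≤ m → q < l →
      i < t + m * (l + q) ∧ t + m * (l + q) ≤ 2 * i := by
    intro t q ht hq
    have h1 : m * (q + 1) ≤ m * l := Nat.mul_le_mul_left m hq
    have h2 : m * l = i := by rw [hi, mul_comm]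
    rw [mul_add] at h1 ⊢
    omega
  have hkn : ∀ (μ : Msg K m) (k : User K) (q : ℕ), q < l → (μ ∈ tildeKnown K m i L a k ↔
      ∃ v r : ℕ, 1 ≤ v ∧ v + 1 ≤ i ∧ 1 ≤ r ∧ r ≤ L ∧
      (μ.1.1 : ℤ) ≡ k.1 + ((QQ m L a (μ.1.2 + m * (l + q)) : ℤ) -
        QQ m L a (μ.1.2 + m * (l + q) - v) - L + r) [ZMOD K]) := by
    intro μ k q hq
    have ht := Finset.mem_Icc.1 μ.2.2
    exact known_iff K m i L a hK1 k.1 μ.1.1 μ.1.2 _ (l + q) (Finset.mem_Icc.1 μ.2.1)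
      ht rfl (hs2 _ _ ht hq).1.le
  -- upper bound codes
  have hub : ∀ N : ℕ, (∀ k : User K, ∃ B : Finset (ZMod K), B.card ≤ N ∧
      ∀ μ, μ ∉ tildeKnown K m i L a k → ∀ q : Fin l,
        ((μ.1.1 : ZMod K) - (QQ m L a (μ.1.2 + m * (l + q)) : ZMod K)) ∈ B) →
      ∃ r, 1 ≤ r ∧ ValidCode (tildeWant K m) (tildeKnown K m i L a) (l * r) (N * r) := by
    intro N hN
    have : NeZero K := ⟨by omega⟩
    let _ : Fintype (Msg K m) := Fintype.subtype (Finset.Icc 1 K ×ˢ Finset.Icc 1 m) (by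
      intro x; rw [Finset.mem_product])
    refine ub_code (P := ZMod K) _ _ l N
      (fun μ q => (μ.1.1 : ZMod K) - (QQ m L a (μ.1.2 + m * (l + q)) : ZMod K)) ?_ hN
    intro k μ0 hμ0 q0 μ q hpos hnk
    have hμ0' : μ0.1.1 = k.1 := hμ0
    have ht := Finset.mem_Icc.1 μ.2.2
    have ht0 := Finset.mem_Icc.1 μ0.2.2
    have hmod : (μ.1.1 : ℤ) - (QQ m L a (μ.1.2 + m * (l + q)) : ℤ) ≡
        k.1 - (QQ m L a (μ0.1.2 + m * (l + q0)) : ℤ) [ZMOD K] := by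
      rw [← ZMod.intCast_eq_intCast_iff]
      push_cast
      rw [← hμ0']
      exact hpos
    have hse : μ.1.2 + m * (l + (q : ℕ)) = μ0.1.2 + m * (l + (q0 : ℕ)) := by
      by_contra hne
      exact hnk ((hkn μ k q q.2).2 (dec_known K i L hL (QQ m L a) hper _ _ _ _
        (hs2 _ _ ht q.2) (hs2 _ _ ht0 q0.2) hne hmod))
    have hq : (q : ℕ) = q0 := by
      rcases lt_trichotomy (q : ℕ) q0 with h | h | h
      · have : m * (l + q + 1) ≤ m * (l + q0) := Nat.mul_le_mul_left m (by omega)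
        rw [mul_add m (l + (q : ℕ)) 1] at this
        omega
      · exact h
      · have : m * (l + q0 + 1) ≤ m * (l + q) := Nat.mul_le_mul_left m (by omega)
        rw [mul_add m (l + (q0 : ℕ)) 1] at this
        omega
    have htt : μ.1.2 = μ0.1.2 := by rw [hq] at hse; omega
    refine ⟨?_, Fin.ext hq⟩
    rw [hse] at hmod
    have hb : (μ.1.1 : ℤ) ≡ k.1 [ZMOD K] := by
      have := hmod.add_right (QQ m L a (μ0.1.2 + m * (l + (q0 : ℕ))) : ℤ)
      simpa using this
    have := eq_of_modEq (Finset.mem_Icc.1 μ.2.1) (Finset.mem_Icc.1 k.2) hb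
    exact Subtype.ext (Prod.ext (this.trans hμ0'.symm) htt)
  have hbdd : BddBelow {ρ : ℝ | ∃ t ℓ : ℕ, 1 ≤ t ∧
      ValidCode (tildeWant K m) (tildeKnown K m i L a) t ℓ ∧ ρ = (ℓ : ℝ) / (t : ℝ)} := by
    refine ⟨0, ?_⟩
    rintro ρ ⟨t, ℓ, -, -, rfl⟩
    positivity
  have hle : ∀ N : ℕ, (∃ r, 1 ≤ r ∧
      ValidCode (tildeWant K m) (tildeKnown K m i L a) (l * r) (N * r)) →
      optRate (tildeWant K m) (tildeKnown K m i L a) ≤ (1 / (l : ℝ)) * N := by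
    rintro N ⟨r, hr, hv⟩
    refine csInf_le hbdd ⟨l * r, N * r, Nat.mul_pos hl hr, hv, ?_⟩
    have : (r : ℝ) ≠ 0 := by positivity
    have : (l : ℝ) ≠ 0 := by positivity
    push_cast
    field_simp
  have hcodeK := hub K (fun k => by
    have : NeZero K := ⟨by omega⟩
    exact ⟨Finset.univ, by simp [ZMod.card], fun _ _ _ => Finset.mem_univ _⟩)
  have hsum : (∑ n ∈ Finset.Ico 1 (2 * i), alf m a n) + a m =
      2 * (l * ∑ k ∈ Finset.Icc 1 m, a k) := by
    have h1 : ∑ n ∈ Finset.range (2 * i), alf m a n = 2 * (l * ∑ k ∈ Finset.Icc 1 m, a k) := by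
      have h2 := QQ_add_mul m 0 hm a 0 (2 * l)
      rw [show 0 + 2 * l * m = 2 * i by rw [hi]; ring] at h2
      simp only [QQ, add_zero, Finset.range_zero, Finset.sum_empty, mul_zero, zero_add] at h2
      rw [h2]; ring
    rw [Finset.range_eq_Ico, Finset.sum_eq_sum_Ico_succ_bot (by omega)] at h1
    have h3 : alf m a 0 = a m := by
      rw [← alf_add m a 0 1, ← alf_of_mem a ⟨hm, le_refl m⟩]
      simp
    rw [h3] at h1
    simp only [zero_add] at h1
    omega
  have hcodeN := hub (i + ∑ n ∈ Finset.Ico 1 (2 * i), alf m a n) (fun k => by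
    classical
    refine ⟨(Finset.Ioc i (2 * i)).image (fun s => (k.1 : ZMod K) - (QQ m L a s : ZMod K)) ∪
      (Finset.Ico 1 (2 * i)).biUnion fun n => (Finset.range (alf m a n)).image
        fun x : ℕ => (k.1 : ZMod K) - (QQ m L a (n + 1) : ZMod K) + 1 + (x : ZMod K), ?_, ?_⟩
    · refine (Finset.card_union_le _ _).trans (add_le_add ?_ ?_)
      · refine Finset.card_image_le.trans ?_
        simp; omega
      · refine Finset.card_biUnion_le.trans (Finset.sum_le_sum fun n _ => ?_)
        exact Finset.card_image_le.trans (by simp)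
    · intro μ hμ q
      rw [hkn μ k q q.2] at hμ
      have ht := Finset.mem_Icc.1 μ.2.2
      have hs := hs2 _ _ ht q.2
      rw [Finset.mem_union]
      rcases unknown_mem K m i L hK1 hi1 a hper _ _ _ hs hμ with h | ⟨n, x, hn1, hn2, hx, h⟩
      · left
        rw [← ZMod.intCast_eq_intCast_iff] at h
        push_cast at h
        exact Finset.mem_image.2 ⟨_, Finset.mem_Ioc.2 hs, h.symm⟩
      · right
        rw [← ZMod.intCast_eq_intCast_iff] at h
        push_cast at h
        exact Finset.mem_biUnion.2 ⟨n, Finset.mem_Ico.2 ⟨hn1, hn2⟩,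
          Finset.mem_image.2 ⟨x, Finset.mem_range.2 hx, h.symm⟩⟩)
  have hAm : a m ≤ l * ∑ k ∈ Finset.Icc 1 m, a k := by
    have h1 : a m ≤ ∑ k ∈ Finset.Icc 1 m, a k :=
      Finset.single_le_sum (f := a) (fun _ _ => Nat.zero_le _) (Finset.mem_Icc.2 ⟨hm, le_refl m⟩)
    exact h1.trans (Nat.le_mul_of_pos_left _ hl)
  constructor
  · -- lower bound
    refine le_csInf ?_ ?_
    · obtain ⟨r, hr, hv⟩ := hcodeK
      exact ⟨_, l * r, K * r, Nat.mul_pos hl hr, hv, rfl⟩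
    rintro ρ ⟨t, ℓ, ht, hv, rfl⟩
    classical
    let S0 : Finset (ℕ × ℕ) := (Finset.Icc 1 m).biUnion fun t =>
      (Finset.Icc (a m + 1 - a t) (a m + 1)).image fun b => (b, t)
    have hS0 : ∀ p : ℕ × ℕ, p ∈ S0 ↔ (1 ≤ p.2 ∧ p.2 ≤ m) ∧
        (a m + 1 - a p.2 ≤ p.1 ∧ p.1 ≤ a m + 1) := by
      rintro ⟨b, t⟩
      simp only [S0, Finset.mem_biUnion, Finset.mem_image, Finset.mem_Icc, Prod.mk.injEq]
      constructor
      · rintro ⟨t', ht', b', hb', rfl, rfl⟩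
        exact ⟨ht', hb'⟩
      · rintro ⟨h1, h2⟩
        exact ⟨t, h1, b, h2, rfl, rfl⟩
    have hS0K : ∀ p ∈ S0, p.1 ∈ Finset.Icc 1 K ∧ p.2 ∈ Finset.Icc 1 m := by
      intro p hp
      obtain ⟨h1, h2⟩ := (hS0 p).1 hp
      have := hmax p.2 (Finset.mem_Icc.2 h1)
      refine ⟨Finset.mem_Icc.2 ⟨by omega, ?_⟩, Finset.mem_Icc.2 h1⟩
      rw [hK]
      omega
    have hcard0 : S0.card = ∑ t ∈ Finset.Icc 1 m, (a t + 1) := by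
      rw [Finset.card_biUnion]
      · refine Finset.sum_congr rfl fun t ht => ?_
        have := hmax t ht
        rw [Finset.card_image_of_injective _ (fun x y h => by simpa using h), Nat.card_Icc]
        omega
      · intro x _ y _ hxy
        rw [Function.onFun, Finset.disjoint_left]
        rintro p hp hp'
        obtain ⟨b, -, rfl⟩ := Finset.mem_image.1 hp
        obtain ⟨b', -, h⟩ := Finset.mem_image.1 hp'
        exact hxy (Prod.ext_iff.1 h).2.symm
    let S : Finset (Msg K m) := S0.subtype _
    have hScard : S.card = S0.card := by
      rw [Finset.card_subtype, Finset.filter_true_of_mem hS0K]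
    have hmain := lb_code (tildeWant K m) (tildeKnown K m i L a) S (fun μ => K - μ.1.1) (by
      intro μ hμ
      have hμ' := (hS0 _).1 (Finset.mem_subtype.1 hμ)
      have hμK := Finset.mem_Icc.1 μ.2.1
      refine ⟨⟨μ.1.1, μ.2.1⟩, rfl, ?_⟩
      intro ν hν hk
      have hν' := (hS0 _).1 (Finset.mem_subtype.1 hν)
      have hνK := Finset.mem_Icc.1 ν.2.1
      have hat := hmax ν.1.2 ν.2.2
      by_contra hcon
      have hle' : ν.1.1 ≤ μ.1.1 := by omega
      obtain ⟨v, r, hv1, hv2, hr1, hr2, hmod⟩ := (hkn ν _ 0 hl).1 hk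
      have hs := hs2 ν.1.2 0 hν'.1 hl
      have halfs : alf m a (ν.1.2 + m * (l + 0) - i) = a ν.1.2 := by
        rw [show ν.1.2 + m * (l + 0) - i = ν.1.2 by
          rw [hi, add_zero, mul_comm l m]; omega]
        exact alf_of_mem a hν'.1
      generalize ν.1.2 + m * (l + 0) = s at hmod hs halfs
      have hq1 := hper (s - i)
      rw [Nat.sub_add_cancel hs.1.le] at hq1
      have hq2 := QQ_succ m L a (s - i)
      have hq3 : QQ m L a (s - i + 1) ≤ QQ m L a (s - v) := QQ_mono m L a (by omega)
      have hq4 : QQ m L a (s - v) + L ≤ QQ m L a s := by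
        have h5 : QQ m L a (s - v + 1) ≤ QQ m L a s := QQ_mono m L a (by omega)
        rw [QQ_succ] at h5
        omega
      obtain ⟨c, hc⟩ := hmod.dvd
      simp only at hc
      have hcpos : 0 < (K : ℤ) * c := by omega
      have hclt : (K : ℤ) * c < K * 1 := by omega
      have hc0 : 0 < c := pos_of_mul_pos_right hcpos (by omega)
      have hc1 : c < 1 := lt_of_mul_lt_mul_left hclt (by omega)
      omega) t ℓ hv
    rw [hScard, hcard0] at hmain
    have ht' : (0 : ℝ) < t := by exact_mod_cast ht
    rw [le_div_iff₀ ht']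
    have : (((∑ t ∈ Finset.Icc 1 m, (a t + 1)) * t : ℕ) : ℝ) ≤ ℓ := by exact_mod_cast hmain
    push_cast at this
    exact this
  · -- upper bound
    have h1 := hle _ hcodeK
    have h2 := hle _ hcodeN
    have hN : ((i + ∑ n ∈ Finset.Ico 1 (2 * i), alf m a n : ℕ) : ℝ) =
        2 * ((K : ℝ) - ((i : ℝ) - 1) * (L : ℝ)) + (i : ℝ) - 2 - (a m : ℝ) := by
      have h3 : ((∑ n ∈ Finset.Ico 1 (2 * i), alf m a n : ℕ) : ℝ) + a m =
          2 * (l * (∑ k ∈ Finset.Icc 1 m, a k : ℕ)) := by exact_mod_cast hsum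
      have h4 : (K : ℝ) = l * (∑ k ∈ Finset.Icc 1 m, a k : ℕ) + ((i : ℝ) - 1) * L + 1 := by
        rw [hK]
        push_cast [Nat.cast_sub hi1]
        ring
      rw [Nat.cast_add, h4]
      linear_combination h3
    rw [hN] at h2
    rcases min_choice (2 * ((K : ℝ) - ((i : ℝ) - 1) * (L : ℝ)) + (i : ℝ) - 2 - (a m : ℝ)) (K : ℝ)
      with h | h
    · rw [h]; exact h2
    · rw [h]; exact h1
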